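/- Let G be a chain graph with chain components 𝒯 and let ≺₁ and ≺₂ be two strict total orders of 𝒯 both consistent with G. Then a strictly positive joint probability mass function p obeys the multivariate regression Markov property for G with respect to ≺₁ if and only if it obeys it with respect to ≺₂; i.e., the multivariate regression Markov property depends only on the chain graph G and not on the chosen consistent ordering. -/

import Mathlib

open scoped Classical BigOperators

/-- A mixed graph on a node set `V`: a set of directed edges and a symmetric
irreflexive set of undirected edges, the two edge sets being disjoint. -/
structure MixedGraph (V : Type*) where
  dir : V → V → Prop
  undir : V → V → Prop
  undir_symm : ∀ {a b}, undir a b → undir b a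
  undir_irrefl : ∀ a, ¬ undir a a
  edge_disjoint : ∀ a b, dir a b → ¬ undir a b

namespace MixedGraph

variable {V : Type*} [Fintype V] [DecidableEq V] (G : MixedGraph V)

/-- One step of a semi-directed path: an undirected edge or a directed edge
followed in the direction of traversal. -/
def step (a b : V) : Prop := G.dir a b ∨ G.undir a b

/-- No semi-directed cycle: there is no directed edge `a → b` together with a
semi-directed path from `b` back to `a`. -/
def NoSemiDirectedCycle : Prop :=
  ∀ a b : V, G.dir a b → ¬ Relation.ReflTransGen G.step b a

/-- Two nodes are in the same chain component iff they are joined by a path of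
undirected edges (the equivalence relation generated by the undirected part). -/
def sameComp (a b : V) : Prop := Relation.ReflTransGen G.undir a b

/-- The chain component of a node. -/
noncomputable def component (v : V) : Finset V :=
  Finset.univ.filter fun w => G.sameComp v w

/-- `T` is a chain component of `G`. -/
def IsComponent (T : Finset V) : Prop := ∃ v, T = G.component v

/-- The collection of chain components of `G`. -/
noncomputable def componentsF : Finset (Finset V) :=
  Finset.univ.image fun v => G.component v

/-- The parents `pa_G(A)`: nodes outside `A` with a directed edge into `A`. -/
noncomputable def paG (A : Finset V) : Finset V :=
  Finset.univ.filter fun w => w ∉ A ∧ ∃ v ∈ A, G.dir w v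

/-- The (inclusive) neighbours `Nb_G(A)`: `A` together with all nodes joined to
`A` by an undirected edge. -/
noncomputable def nbG (A : Finset V) : Finset V :=
  A ∪ Finset.univ.filter fun w => ∃ v ∈ A, G.undir v w

/-- The edge relation of the directed graph `D` of chain components:
`T₁ → T₂` iff they are distinct chain components and `G` has a directed edge
from a node of `T₁` to a node of `T₂`. -/
def dirD (T₁ T₂ : Finset V) : Prop :=
  G.IsComponent T₁ ∧ G.IsComponent T₂ ∧ T₁ ≠ T₂ ∧ ∃ v ∈ T₁, ∃ w ∈ T₂, G.dir v w

/-- `pa_D(T)`: the union of the parent components of `T` in `D`. -/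
noncomputable def paD (T : Finset V) : Finset V :=
  Finset.univ.filter fun w => G.dirD (G.component w) T

/-- `nd_D(T)`: the union of the components `T'` such that there is no directed
path from `T` to `T'` in `D`. -/
noncomputable def ndD (T : Finset V) : Finset V :=
  Finset.univ.filter fun w => ¬ Relation.ReflTransGen G.dirD T (G.component w)

/-- A set of nodes `A` is connected if the subgraph of the undirected part of
`G` induced by `A` is connected (in particular nonempty). -/
def ConnectedIn (A : Finset V) : Prop :=
  A.Nonempty ∧ ∀ a ∈ A, ∀ b ∈ A,
    Relation.ReflTransGen (fun x y => x ∈ A ∧ y ∈ A ∧ G.undir x y) a b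

/-- The connected component of `v` inside the induced subgraph on `A`. -/
noncomputable def compIn (A : Finset V) (v : V) : Finset V :=
  A.filter fun w =>
    Relation.ReflTransGen (fun x y => x ∈ A ∧ y ∈ A ∧ G.undir x y) v w

/-- The set of connected components of the induced subgraph on `A`. -/
noncomputable def connComps (A : Finset V) : Finset (Finset V) :=
  A.image fun v => G.compIn A v

/-- `ord` is a strict total order of the chain components consistent with `G`:
`ord T T'` implies that `T` is not a parent component of `T'`. -/
def ConsistentOrder (ord : Finset V → Finset V → Prop) : Prop :=
  (∀ T₁ T₂, G.IsComponent T₁ → G.IsComponent T₂ → T₁ ≠ T₂ →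
      ord T₁ T₂ ∨ ord T₂ T₁) ∧
  (∀ T, G.IsComponent T → ¬ ord T T) ∧
  (∀ T₁ T₂ T₃, G.IsComponent T₁ → G.IsComponent T₂ → G.IsComponent T₃ →
      ord T₁ T₂ → ord T₂ T₃ → ord T₁ T₃) ∧
  (∀ T₁ T₂, G.IsComponent T₁ → G.IsComponent T₂ → ord T₁ T₂ → ¬ G.dirD T₁ T₂)

/-- `pre(T)`: the union of all the chain components `T'` with `T ≺ T'`
(the predecessors, i.e. the past, of `T`). -/
noncomputable def pre (ord : Finset V → Finset V → Prop) (T : Finset V) :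
    Finset V :=
  Finset.univ.filter fun w => ord T (G.component w)

end MixedGraph

/-- A cell of the joint contingency table: variable `v` takes one of the
levels `0, …, r v - 1` (level `0` playing the role of the first level `1`). -/
abbrev Cell {V : Type*} (r : V → ℕ) := ∀ v : V, Fin (r v)

variable {V : Type*} [Fintype V] [DecidableEq V] {r : V → ℕ}

/-- The marginal probability `p_S(i_S)` (as a function of a full cell `i`,
depending on it only through the coordinates in `S`). -/
noncomputable def marginal (p : Cell r → ℝ) (S : Finset V) (i : Cell r) : ℝ :=
  ∑ j : Cell r, if ∀ v ∈ S, j v = i v then p j else 0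

/-- The conditional probability `p_{A|B}(i_A | i_B)`. -/
noncomputable def condProb (p : Cell r → ℝ) (A B : Finset V) (i : Cell r) : ℝ :=
  marginal p (A ∪ B) i / marginal p B i

/-- `p` is a strictly positive joint probability mass function. -/
def IsPosPMF (p : Cell r → ℝ) : Prop :=
  (∀ i, 0 < p i) ∧ ∑ i : Cell r, p i = 1

/-- Conditional independence `A ⊥ B | C`. -/
def CondIndep (p : Cell r → ℝ) (A B C : Finset V) : Prop :=
  ∀ i : Cell r,
    marginal p (A ∪ B ∪ C) i * marginal p C i =
      marginal p (A ∪ C) i * marginal p (B ∪ C) i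

/-- The cell agreeing with `i` on `S` and equal to the first (reference)
level outside `S`. -/
def splice (hr : ∀ v, 2 ≤ r v) (S : Finset V) (i : Cell r) : Cell r :=
  fun v => if v ∈ S then i v else ⟨0, by have := hr v; omega⟩

/-- The conditional multivariate logistic contrast
`η^{(A)}(i_A | i_B) = Σ_{s ⊆ A} (−1)^{|A∖s|} log p_{A|B}((i_s, 1_{A∖s}) | i_B)`. -/
noncomputable def mlContrast (hr : ∀ v, 2 ≤ r v) (p : Cell r → ℝ)
    (A B : Finset V) (i : Cell r) : ℝ :=
  ∑ s ∈ A.powerset,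
    (-1 : ℝ) ^ (A \ s).card * Real.log (condProb p A B (splice hr (s ∪ B) i))

/-- The multivariate regression (MR) Markov property for the chain graph `G`
with respect to the consistent ordering `ord`: for every chain component `T`
and every nonempty `A ⊆ T`, (MR1) if `A` is connected then
`A ⊥ (pre(T)∖pa_G(A)) | pa_G(A)`, and (MR2) if `A` is disconnected then its
connected components are mutually independent given `pre(T)`. -/
def MRMarkov (G : MixedGraph V) (ord : Finset V → Finset V → Prop)
    (p : Cell r → ℝ) : Prop :=
  ∀ T : Finset V, G.IsComponent T → ∀ A ⊆ T, A.Nonempty →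
    (G.ConnectedIn A →
      CondIndep p A (G.pre ord T \ G.paG A) (G.paG A)) ∧
    (¬ G.ConnectedIn A →
      ∀ i : Cell r,
        condProb p A (G.pre ord T) i =
          ∏ Aj ∈ G.connComps A, condProb p Aj (G.pre ord T) i)

/-- The block-recursive Markov property of type IV for the chain graph `G`:
(IV0) `T ⊥ (nd_D(T)∖pa_D(T)) | pa_D(T)`;
(IV1) `A ⊥ (pa_D(T)∖pa_G(A)) | pa_G(A)` for all `A ⊆ T`;
(IV2) `A ⊥ (T∖Nb_G(A)) | pa_D(T)` for all connected `A ⊆ T`. -/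
def TypeIVMarkov (G : MixedGraph V) (p : Cell r → ℝ) : Prop :=
  (∀ T : Finset V, G.IsComponent T →
      CondIndep p T (G.ndD T \ G.paD T) (G.paD T)) ∧
  (∀ T : Finset V, G.IsComponent T → ∀ A ⊆ T,
      CondIndep p A (G.paD T \ G.paG A) (G.paG A)) ∧
  (∀ T : Finset V, G.IsComponent T → ∀ A ⊆ T, G.ConnectedIn A →
      CondIndep p A (T \ G.nbG A) (G.paD T))

theorem mg_congr (p : Cell r → ℝ) (S : Finset V) (i j : Cell r) (h : ∀ v ∈ S, i v = j v) :
    marginal p S i = marginal p S j := by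
  unfold marginal
  refine Finset.sum_congr rfl fun k _ => ?_
  have : (∀ v ∈ S, k v = i v) ↔ (∀ v ∈ S, k v = j v) :=
    forall₂_congr fun v hv => by rw [h v hv]
  simp only [this]

theorem mg_pos (p : Cell r → ℝ) (hp : ∀ i, 0 < p i) (S : Finset V) (i : Cell r) :
    0 < marginal p S i := by
  unfold marginal
  refine Finset.sum_pos' (fun j _ => ?_) ⟨i, Finset.mem_univ _, ?_⟩
  · split_ifs
    · exact (hp j).le
    · exact le_rfl
  · simp [hp i]

theorem mg_mul (g h : Cell r → ℝ) (W : Finset V)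
    (hg : ∀ i j : Cell r, (∀ v ∈ W, i v = j v) → g i = g j) (i : Cell r) :
    marginal (fun k => g k * h k) W i = g i * marginal h W i := by
  unfold marginal
  rw [Finset.mul_sum]
  refine Finset.sum_congr rfl fun k _ => ?_
  split_ifs with hk
  · show g k * h k = g i * h k
    rw [hg k i hk]
  · simp

theorem mg_mg (p : Cell r → ℝ) (U W X : Finset V) (hUW : ∀ v, v ∈ U ∨ v ∈ W)
    (hX : ∀ v, v ∈ X ↔ v ∈ U ∧ v ∈ W) (i : Cell r) :
    marginal (marginal p U) W i = marginal p X i := by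
  unfold marginal
  have h1 : ∀ j : Cell r, (if ∀ v ∈ W, j v = i v then
      ∑ k : Cell r, (if ∀ v ∈ U, k v = j v then p k else 0) else 0)
      = ∑ k : Cell r, (if (∀ v ∈ W, j v = i v) ∧ (∀ v ∈ U, k v = j v) then p k else 0) := by
    intro j
    by_cases h : ∀ v ∈ W, j v = i v
    · rw [if_pos h]
      refine Finset.sum_congr rfl fun k _ => ?_
      by_cases hk : ∀ v ∈ U, k v = j v
      · rw [if_pos hk, if_pos ⟨h, hk⟩]
      · rw [if_neg hk, if_neg fun hh => hk hh.2]
    · rw [if_neg h]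
      refine (Finset.sum_eq_zero fun k _ => ?_).symm
      rw [if_neg fun hh => h hh.1]
  rw [Finset.sum_congr rfl fun j _ => h1 j, Finset.sum_comm]
  refine Finset.sum_congr rfl fun k _ => ?_
  by_cases hk : ∀ v ∈ X, k v = i v
  · rw [if_pos hk]
    rw [Finset.sum_eq_single (fun v => if v ∈ U then k v else i v)]
    · rw [if_pos]
      refine ⟨fun v hv => ?_, fun v hv => ?_⟩
      · by_cases hU : v ∈ U
        · simp only [hU, if_true]; exact hk v ((hX v).2 ⟨hU, hv⟩)
        · simp only [hU, if_false]
      · simp only [hv, if_true]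
    · intro j _ hj
      rw [if_neg]
      rintro ⟨ha, hb⟩
      apply hj
      funext v
      by_cases hU : v ∈ U
      · simp only [hU, if_true]; exact (hb v hU).symm
      · simp only [hU, if_false]; exact ha v ((hUW v).resolve_left hU)
    · intro h; exact absurd (Finset.mem_univ _) h
  · rw [if_neg hk]
    refine Finset.sum_eq_zero fun j _ => ?_
    rw [if_neg]
    rintro ⟨ha, hb⟩
    exact hk fun v hv => by
      rw [hb v ((hX v).1 hv).1, ha v ((hX v).1 hv).2]

/-- marginalising a factorisation over part of the conditioning set -/
theorem mg_shrink (p f : Cell r → ℝ) (A S S' : Finset V) (hS : S' ⊆ S) (hd : Disjoint A S)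
    (hf : ∀ i j : Cell r, (∀ v ∈ A ∪ S', i v = j v) → f i = f j)
    (h : ∀ i, marginal p (A ∪ S) i = f i * marginal p S i) (i : Cell r) :
    marginal p (A ∪ S') i = f i * marginal p S' i := by
  have hA : ∀ v ∈ A, v ∉ S := fun v hv hv' => Finset.disjoint_left.1 hd hv hv'
  rw [← mg_mg p (A ∪ S) (S \ S')ᶜ (A ∪ S'), ← mg_mg p S (S \ S')ᶜ S', ← mg_mul]
  · congr 1
    funext k
    exact h k
  · intro a b hab
    refine hf a b fun v hv => hab v ?_
    have := hA v
    simp at hv ⊢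
    tauto
  · intro v; simp; tauto
  · intro v; have := @hS v; simp; tauto
  · intro v; simp; tauto
  · intro v; have := @hS v; have := hA v; simp; tauto

theorem mg_shrink2 (p : Cell r → ℝ) (T A S P : Finset V) (hP : P ⊆ S) (hd : Disjoint T S)
    (hA : A ⊆ T)
    (h : ∀ i, marginal p P i * marginal p (T ∪ S) i = marginal p S i * marginal p (T ∪ P) i)
    (i : Cell r) :
    marginal p P i * marginal p (A ∪ S) i = marginal p S i * marginal p (A ∪ P) i := by
  have hT : ∀ v ∈ T, v ∉ S := fun v hv hv' => Finset.disjoint_left.1 hd hv hv'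
  rw [← mg_mg p (T ∪ S) (T \ A)ᶜ (A ∪ S), ← mg_mg p (T ∪ P) (T \ A)ᶜ (A ∪ P), ← mg_mul,
    ← mg_mul]
  · congr 1
    funext k
    exact h k
  · intro a b hab
    refine mg_congr p S a b fun v hv => hab v ?_
    have := hT v
    simp
    tauto
  · intro a b hab
    refine mg_congr p P a b fun v hv => hab v ?_
    have := hT v
    have := @hP v
    simp
    tauto
  · intro v; simp; tauto
  · intro v; have := @hP v; have := hT v; have := @hA v; simp; tauto
  · intro v; simp; tauto
  · intro v; have := @hP v; have := hT v; have := @hA v; simp; tauto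

namespace MixedGraph

theorem sameComp_symm (G : MixedGraph V) {a b : V} (h : G.sameComp a b) : G.sameComp b a := by
  unfold sameComp at *
  induction h with
  | refl => exact .refl
  | tail _ hbc ih => exact .head (G.undir_symm hbc) ih

theorem mem_component (G : MixedGraph V) {v w : V} : w ∈ G.component v ↔ G.sameComp v w := by
  simp [component]

theorem component_eq (G : MixedGraph V) {v w : V} (h : w ∈ G.component v) :
    G.component w = G.component v := by
  rw [mem_component] at h
  ext x
  simp only [mem_component]
  exact ⟨fun hx => Relation.ReflTransGen.trans h hx,
    fun hx => Relation.ReflTransGen.trans (G.sameComp_symm h) hx⟩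

theorem IsComponent.eq {G : MixedGraph V} {T : Finset V} (hT : G.IsComponent T) {w : V}
    (h : w ∈ T) : G.component w = T := by
  obtain ⟨v, rfl⟩ := hT
  exact G.component_eq h

theorem self_mem (G : MixedGraph V) (v : V) : v ∈ G.component v :=
  G.mem_component.2 .refl

theorem isComponent_component (G : MixedGraph V) (v : V) : G.IsComponent (G.component v) :=
  ⟨v, rfl⟩

theorem paG_subset_paD (G : MixedGraph V) (hG : G.NoSemiDirectedCycle) {T A : Finset V}
    (hT : G.IsComponent T) (hA : A ⊆ T) : G.paG A ⊆ G.paD T := by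
  intro w hw
  simp only [paG, Finset.mem_filter, Finset.mem_univ, true_and] at hw
  obtain ⟨_, v, hv, hwv⟩ := hw
  simp only [paD, Finset.mem_filter, Finset.mem_univ, true_and]
  refine ⟨G.isComponent_component w, hT, ?_, w, G.self_mem w, v, hA hv, hwv⟩
  intro heq
  apply hG w v hwv
  have h1 : v ∈ G.component w := heq ▸ hA hv
  have h2 := G.sameComp_symm (G.mem_component.1 h1)
  unfold sameComp at h2
  exact Relation.ReflTransGen.mono (fun a b h => Or.inr h) _ _ h2

theorem mem_pre (G : MixedGraph V) {ord : Finset V → Finset V → Prop} {T : Finset V} {w : V} :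
    w ∈ G.pre ord T ↔ ord T (G.component w) := by simp [pre]

theorem mem_paD (G : MixedGraph V) {T : Finset V} {w : V} :
    w ∈ G.paD T ↔ G.dirD (G.component w) T := by simp [paD]

theorem paD_subset_pre (G : MixedGraph V) {ord : Finset V → Finset V → Prop}
    (ho : G.ConsistentOrder ord) {T : Finset V} (hT : G.IsComponent T) :
    G.paD T ⊆ G.pre ord T := by
  intro w hw
  rw [mem_paD] at hw
  rw [mem_pre]
  rcases ho.1 _ _ hw.1 hT hw.2.2.1 with h | h
  · exact absurd hw (ho.2.2.2 _ _ hw.1 hT h)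
  · exact h

theorem disjoint_pre (G : MixedGraph V) {ord : Finset V → Finset V → Prop}
    (ho : G.ConsistentOrder ord) {T : Finset V} (hT : G.IsComponent T) :
    Disjoint T (G.pre ord T) := by
  rw [Finset.disjoint_left]
  intro w hw hw'
  rw [mem_pre, hT.eq hw] at hw'
  exact ho.2.1 T hT hw'

/-- ancestral unions of components -/
def Anc (G : MixedGraph V) (S : Finset V) : Prop :=
  ∀ w ∈ S, G.component w ⊆ S ∧ G.paD (G.component w) ⊆ S

theorem anc_pre (G : MixedGraph V) {ord : Finset V → Finset V → Prop}
    (ho : G.ConsistentOrder ord) {T : Finset V} (hT : G.IsComponent T) :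
    G.Anc (G.pre ord T) := by
  intro w hw
  rw [mem_pre] at hw
  refine ⟨fun x hx => ?_, fun x hx => ?_⟩
  · rw [mem_pre, G.component_eq hx]; exact hw
  · have := G.paD_subset_pre ho (G.isComponent_component w) hx
    rw [mem_pre] at this ⊢
    exact ho.2.2.1 _ _ _ hT (G.isComponent_component w) (G.isComponent_component x) hw this

theorem anc_union_pre (G : MixedGraph V) {ord : Finset V → Finset V → Prop}
    (ho : G.ConsistentOrder ord) {T : Finset V} (hT : G.IsComponent T) :
    G.Anc (T ∪ G.pre ord T) := by
  intro w hw
  rw [Finset.mem_union] at hw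
  rcases hw with hw | hw
  · rw [hT.eq hw]
    exact ⟨Finset.subset_union_left,
      (G.paD_subset_pre ho hT).trans Finset.subset_union_right⟩
  · exact ⟨(G.anc_pre ho hT w hw).1.trans Finset.subset_union_right,
      (G.anc_pre ho hT w hw).2.trans Finset.subset_union_right⟩

/-- the last component of a nonempty set -/
theorem exists_last (G : MixedGraph V) {ord : Finset V → Finset V → Prop}
    (ho : G.ConsistentOrder ord) (S : Finset V) (hS : S.Nonempty) :
    ∃ t ∈ S, ∀ w ∈ S, w ∉ G.component t → ord (G.component t) (G.component w) := by
  induction hS using Finset.Nonempty.cons_induction with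
  | singleton a =>
    refine ⟨a, by simp, fun w hw hw' => ?_⟩
    rw [Finset.mem_singleton] at hw
    subst hw
    exact absurd (G.self_mem w) hw'
  | cons a s ha hs ih =>
    obtain ⟨t, ht, hmin⟩ := ih
    by_cases hat : a ∈ G.component t
    · refine ⟨t, by simp [ht], fun w hw hw' => ?_⟩
      rw [Finset.mem_cons] at hw
      rcases hw with rfl | hw
      · exact absurd hat hw'
      · exact hmin w hw hw'
    · have hne : G.component a ≠ G.component t := fun h => hat (h ▸ G.self_mem a)
      rcases ho.1 _ _ (G.isComponent_component a) (G.isComponent_component t) hne with h | h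
      · refine ⟨a, by simp, fun w hw hw' => ?_⟩
        rw [Finset.mem_cons] at hw
        rcases hw with rfl | hw
        · exact absurd (G.self_mem w) hw'
        · by_cases hwt : w ∈ G.component t
          · rw [G.component_eq hwt]; exact h
          · exact ho.2.2.1 _ _ _ (G.isComponent_component a) (G.isComponent_component t)
              (G.isComponent_component w) h (hmin w hw hwt)
      · refine ⟨t, by simp [ht], fun w hw hw' => ?_⟩
        rw [Finset.mem_cons] at hw
        rcases hw with rfl | hw
        · exact h
        · exact hmin w hw hw'

theorem compIn_subset (G : MixedGraph V) (A : Finset V) (v : V) : G.compIn A v ⊆ A :=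
  Finset.filter_subset _ _

theorem compIn_connected (G : MixedGraph V) (A : Finset V) (v : V) (hv : v ∈ A) :
    G.ConnectedIn (G.compIn A v) := by
  have key : ∀ a, a ∈ G.compIn A v → Relation.ReflTransGen
      (fun x y => x ∈ G.compIn A v ∧ y ∈ G.compIn A v ∧ G.undir x y) v a := by
    intro a ha
    have ha' := (Finset.mem_filter.1 ha).2
    clear ha
    induction ha' with
    | refl => exact .refl
    | tail hab hbc ih =>
      refine ih.tail ⟨?_, ?_, hbc.2.2⟩
      · exact Finset.mem_filter.2 ⟨hbc.1, hab⟩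
      · exact Finset.mem_filter.2 ⟨hbc.2.1, hab.tail hbc⟩
  have hsymm : ∀ a b, Relation.ReflTransGen
      (fun x y => x ∈ G.compIn A v ∧ y ∈ G.compIn A v ∧ G.undir x y) a b →
      Relation.ReflTransGen
      (fun x y => x ∈ G.compIn A v ∧ y ∈ G.compIn A v ∧ G.undir x y) b a := by
    intro a b h
    induction h with
    | refl => exact .refl
    | tail _ hbc ih => exact .head ⟨hbc.2.1, hbc.1, G.undir_symm hbc.2.2⟩ ih
  exact ⟨⟨v, Finset.mem_filter.2 ⟨hv, .refl⟩⟩,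
    fun a ha b hb => (hsymm _ _ (key a ha)).trans (key b hb)⟩

theorem connComps_of_connected (G : MixedGraph V) (A : Finset V) (h : G.ConnectedIn A) :
    G.connComps A = {A} := by
  have h1 : ∀ v ∈ A, G.compIn A v = A := fun v hv =>
    Finset.filter_true_of_mem fun w hw => h.2 v hv w hw
  unfold connComps
  ext B
  simp only [Finset.mem_image, Finset.mem_singleton]
  constructor
  · rintro ⟨v, hv, rfl⟩; exact h1 v hv
  · rintro rfl
    obtain ⟨v, hv⟩ := h.1
    exact ⟨v, hv, h1 v hv⟩

end MixedGraph

open MixedGraph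

/-- the product of the regressions of the connected components of `A` on their parents -/
noncomputable def facA (G : MixedGraph V) (p : Cell r → ℝ) (A : Finset V) (i : Cell r) : ℝ :=
  ∏ Aj ∈ G.connComps A, condProb p Aj (G.paG Aj) i

theorem facA_congr (G : MixedGraph V) (hG : G.NoSemiDirectedCycle) (p : Cell r → ℝ)
    {T A : Finset V} (hT : G.IsComponent T) (hA : A ⊆ T) (i j : Cell r)
    (h : ∀ v ∈ A ∪ G.paD T, i v = j v) : facA G p A i = facA G p A j := by
  unfold facA
  refine Finset.prod_congr rfl fun B hB => ?_
  obtain ⟨v, hv, rfl⟩ := Finset.mem_image.1 hB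
  have h1 := G.compIn_subset A v
  have h2 := G.paG_subset_paD hG hT (h1.trans hA)
  unfold condProb
  rw [mg_congr p _ i j fun v hv => h v (Finset.union_subset_union h1 h2 hv),
    mg_congr p _ i j fun v hv => h v (Finset.mem_union_right _ (h2 hv))]

theorem condIndep_iff (p : Cell r → ℝ) (hp : ∀ i, 0 < p i) (A S P : Finset V) (hP : P ⊆ S) :
    CondIndep p A (S \ P) P ↔ ∀ i, condProb p A S i = condProb p A P i := by
  unfold CondIndep condProb
  rw [Finset.union_assoc, Finset.sdiff_union_of_subset hP]
  refine forall_congr' fun i => ?_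
  rw [div_eq_div_iff (mg_pos p hp _ i).ne' (mg_pos p hp _ i).ne']

theorem mr_iff (G : MixedGraph V) (hG : G.NoSemiDirectedCycle)
    (ord : Finset V → Finset V → Prop) (ho : G.ConsistentOrder ord)
    (p : Cell r → ℝ) (hp : ∀ i, 0 < p i) :
    MRMarkov G ord p ↔ ∀ T : Finset V, G.IsComponent T → ∀ A ⊆ T, A.Nonempty →
      ∀ i, condProb p A (G.pre ord T) i = facA G p A i := by
  unfold MRMarkov
  refine forall₂_congr fun T hT => ?_
  have hpa : ∀ A ⊆ T, G.paG A ⊆ G.pre ord T := fun A hA =>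
    (G.paG_subset_paD hG hT hA).trans (G.paD_subset_pre ho hT)
  have hc : ∀ A, G.ConnectedIn A → ∀ i, facA G p A i = condProb p A (G.paG A) i := by
    intro A hA i
    rw [facA, G.connComps_of_connected A hA, Finset.prod_singleton]
  have hprod : ∀ A ⊆ T, (∀ B ⊆ T, G.ConnectedIn B →
      ∀ i, condProb p B (G.pre ord T) i = condProb p B (G.paG B) i) → ∀ i,
      ∏ Aj ∈ G.connComps A, condProb p Aj (G.pre ord T) i = facA G p A i := by
    intro A hA h i
    unfold facA
    refine Finset.prod_congr rfl fun B hB => ?_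
    obtain ⟨v, hv, rfl⟩ := Finset.mem_image.1 hB
    exact h _ ((G.compIn_subset A v).trans hA) (G.compIn_connected A v hv) i
  constructor
  · intro h A hA hne i
    have h1 : ∀ B ⊆ T, G.ConnectedIn B →
      ∀ i, condProb p B (G.pre ord T) i = condProb p B (G.paG B) i := fun B hB hBc =>
        (condIndep_iff p hp B _ _ (hpa B hB)).1 ((h B hB hBc.1).1 hBc)
    by_cases hAc : G.ConnectedIn A
    · rw [hc A hAc, h1 A hA hAc]
    · rw [(h A hA hne).2 hAc i, hprod A hA h1]
  · intro h A hA hne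
    have h1 : ∀ B ⊆ T, G.ConnectedIn B →
      ∀ i, condProb p B (G.pre ord T) i = condProb p B (G.paG B) i := fun B hB hBc i => by
        rw [h B hB hBc.1 i, hc B hBc]
    refine ⟨fun hAc => (condIndep_iff p hp A _ _ (hpa A hA)).2 (h1 A hA hAc), fun _ i => ?_⟩
    rw [h A hA hne i, hprod A hA h1]

/-- the product of the factors of all components in `S` -/
noncomputable def facS (G : MixedGraph V) (p : Cell r → ℝ) (S : Finset V) (i : Cell r) : ℝ :=
  ∏ T ∈ G.componentsF.filter (fun T => T ⊆ S), facA G p T i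

theorem facS_union (G : MixedGraph V) (p : Cell r → ℝ) (T S : Finset V)
    (hT : G.IsComponent T) (hd : Disjoint T S) (i : Cell r) :
    facS G p (T ∪ S) i = facA G p T i * facS G p S i := by
  unfold facS
  have hTne : ∃ t, t ∈ T := by
    obtain ⟨v, rfl⟩ := hT
    exact ⟨v, G.self_mem v⟩
  have hTc : T ∈ G.componentsF := by
    obtain ⟨v, rfl⟩ := hT
    exact Finset.mem_image_of_mem _ (Finset.mem_univ v)
  have : G.componentsF.filter (fun C => C ⊆ T ∪ S) =
      insert T (G.componentsF.filter (fun C => C ⊆ S)) := by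
    ext C
    simp only [Finset.mem_filter, Finset.mem_insert]
    constructor
    · rintro ⟨hC, hsub⟩
      by_cases hCT : C = T
      · exact Or.inl hCT
      · refine Or.inr ⟨hC, fun x hx => ?_⟩
        rcases Finset.mem_union.1 (hsub hx) with h | h
        · obtain ⟨c, _, rfl⟩ := Finset.mem_image.1 hC
          exact absurd ((G.component_eq hx).symm.trans (hT.eq h)) hCT
        · exact h
    · rintro (rfl | ⟨hC, hsub⟩)
      · exact ⟨hTc, Finset.subset_union_left⟩
      · exact ⟨hC, hsub.trans Finset.subset_union_right⟩
  rw [this, Finset.prod_insert]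
  intro hmem
  obtain ⟨t, ht⟩ := hTne
  exact Finset.disjoint_left.1 hd ht ((Finset.mem_filter.1 hmem).2 ht)

theorem marginal_anc (G : MixedGraph V) (hG : G.NoSemiDirectedCycle)
    (ord : Finset V → Finset V → Prop) (ho : G.ConsistentOrder ord)
    (p : Cell r → ℝ) (hp : IsPosPMF p)
    (h : ∀ T : Finset V, G.IsComponent T → ∀ A ⊆ T, A.Nonempty →
      ∀ i, condProb p A (G.pre ord T) i = facA G p A i) :
    ∀ (n : ℕ) (S : Finset V), S.card = n → G.Anc S → ∀ i, marginal p S i = facS G p S i := by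
  intro n
  induction n using Nat.strong_induction_on with
  | _ n ih =>
  intro S hn hS i
  rcases S.eq_empty_or_nonempty with rfl | hne
  · have h1 : G.componentsF.filter (fun T => T ⊆ (∅ : Finset V)) = ∅ := by
      rw [Finset.filter_eq_empty_iff]
      intro C hC hsub
      obtain ⟨c, _, rfl⟩ := Finset.mem_image.1 hC
      exact absurd (hsub (G.self_mem c)) (Finset.notMem_empty _)
    rw [facS, h1, Finset.prod_empty]
    simp [marginal, hp.2]
  · obtain ⟨t, ht, hmin⟩ := G.exists_last ho S hne
    have hT := G.isComponent_component t
    have hTS : G.component t ⊆ S := (hS t ht).1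
    have hpre : S \ G.component t ⊆ G.pre ord (G.component t) := by
      intro w hw
      rw [Finset.mem_sdiff] at hw
      exact G.mem_pre.2 (hmin w hw.1 hw.2)
    have hpaD : G.paD (G.component t) ⊆ S \ G.component t := by
      intro w hw
      refine Finset.mem_sdiff.2 ⟨(hS t ht).2 hw, fun hw' => ?_⟩
      exact (G.mem_paD.1 hw).2.2.1 (G.component_eq hw')
    have hanc : G.Anc (S \ G.component t) := by
      intro w hw
      have hw' := Finset.mem_sdiff.1 hw
      refine ⟨fun x hx => Finset.mem_sdiff.2 ⟨(hS w hw'.1).1 hx, fun hx' => ?_⟩,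
        fun x hx => Finset.mem_sdiff.2 ⟨(hS w hw'.1).2 hx, fun hx' => ?_⟩⟩
      · apply hw'.2
        rw [← G.component_eq hx', G.component_eq hx]
        exact G.self_mem w
      · have h3 := G.mem_paD.1 hx
        rw [G.component_eq hx'] at h3
        exact ho.2.2.2 _ _ hT (G.isComponent_component w) (hmin w hw'.1 hw'.2) h3
    have hcard : (S \ G.component t).card < n := by
      rw [← hn]
      exact Finset.card_lt_card ⟨Finset.sdiff_subset, fun hh =>
        (Finset.mem_sdiff.1 (hh ht)).2 (G.self_mem t)⟩
    have hU : G.component t ∪ S \ G.component t = S := Finset.union_sdiff_of_subset hTS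
    have key := mg_shrink p (facA G p (G.component t)) (G.component t) (G.pre ord (G.component t))
      (S \ G.component t) hpre (G.disjoint_pre ho hT)
      (fun a b hab => facA_congr G hG p hT subset_rfl a b fun v hv =>
        hab v (Finset.union_subset_union subset_rfl hpaD hv))
      (fun k => by
        rw [← h _ hT _ subset_rfl ⟨t, G.self_mem t⟩ k, condProb,
          div_mul_cancel₀ _ (mg_pos p hp.1 _ k).ne']) i
    have key2 := facS_union G p (G.component t) (S \ G.component t) hT
      Finset.disjoint_sdiff i
    rw [hU] at key key2
    rw [key, key2, ih _ hcard _ rfl hanc]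

theorem mr_aux (G : MixedGraph V) (hG : G.NoSemiDirectedCycle)
    (ord₁ ord₂ : Finset V → Finset V → Prop)
    (hord₁ : G.ConsistentOrder ord₁) (hord₂ : G.ConsistentOrder ord₂)
    (p : Cell r → ℝ) (hp : IsPosPMF p) (h : MRMarkov G ord₁ p) : MRMarkov G ord₂ p := by
  rw [mr_iff G hG ord₁ hord₁ p hp.1] at h
  rw [mr_iff G hG ord₂ hord₂ p hp.1]
  intro T hT A hA hne i
  have hm := marginal_anc G hG ord₁ hord₁ p hp h
  have hd := G.disjoint_pre hord₂ hT
  have hsub := G.paD_subset_pre hord₂ hT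
  -- factorisation given the parent components
  have hQ : ∀ B ⊆ T, B.Nonempty → ∀ k, marginal p (B ∪ G.paD T) k =
      facA G p B k * marginal p (G.paD T) k := by
    intro B hB hBne
    refine mg_shrink p (facA G p B) B (G.pre ord₁ T) (G.paD T) (G.paD_subset_pre hord₁ hT)
      (Finset.disjoint_of_subset_left hB (G.disjoint_pre hord₁ hT))
      (fun a b hab => facA_congr G hG p hT hB a b hab) fun k => ?_
    rw [← h _ hT B hB hBne k, condProb, div_mul_cancel₀ _ (mg_pos p hp.1 _ k).ne']
  have hTT : ∀ k, marginal p (T ∪ G.pre ord₂ T) k =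
      facA G p T k * marginal p (G.pre ord₂ T) k := by
    intro k
    rw [hm _ _ rfl (G.anc_union_pre hord₂ hT), hm _ _ rfl (G.anc_pre hord₂ hT),
      facS_union G p T _ hT hd]
  have hfin := mg_shrink2 p T A (G.pre ord₂ T) (G.paD T) hsub hd hA (fun k => by
    rw [hTT k, hQ T subset_rfl (hne.mono hA) k]; ring) i
  rw [hQ A hA hne i] at hfin
  rw [condProb, div_eq_iff (mg_pos p hp.1 _ i).ne']
  have hpos := (mg_pos p hp.1 (G.paD T) i).ne'
  apply mul_left_cancel₀ hpos
  rw [hfin]; ring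

/-- the multivariate regression Markov property does not
depend on the chosen consistent strict total ordering of the chain
components: `p` obeys it w.r.t. `ord₁` iff it obeys it w.r.t. `ord₂`. -/
theorem mr_markov_order_invariant
    {V : Type*} [Fintype V] [DecidableEq V] {r : V → ℕ} (hr : ∀ v, 2 ≤ r v)
    (G : MixedGraph V) (hG : G.NoSemiDirectedCycle)
    (ord₁ ord₂ : Finset V → Finset V → Prop)
    (hord₁ : G.ConsistentOrder ord₁) (hord₂ : G.ConsistentOrder ord₂)
    (p : Cell r → ℝ) (hp : IsPosPMF p) :
    MRMarkov G ord₁ p ↔ MRMarkov G ord₂ p := by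
  exact ⟨mr_aux G hG ord₁ ord₂ hord₁ hord₂ p hp, mr_aux G hG ord₂ ord₁ hord₂ hord₁ p hp⟩
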